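/- Let X be a separable Banach space and Y a Banach space, let Φ : X × Y → ℝ satisfy conditions (i) and (iv), with Φ(·;y) Borel measurable for each y ∈ Y, and let μ0 be a Borel probability measure on X such that there exists α > 0 with ∫_X exp(α‖u‖_X²) dμ0(u) < ∞. Then the normalization constant Z(y) = ∫_X exp(−Φ(u;y)) dμ0(u) is locally Lipschitz in the data: for every r > 0 there exists C = C(r) > 0 such that |Z(y) − Z(y')| ≤ C‖y − y'‖_Y for all y, y' ∈ Y with ‖y‖_Y, ‖y'‖_Y < r. -/

import Mathlib

open MeasureTheory

theorem exp_neg_lip (a b m : ℝ) (ha : m ≤ a) (hb : m ≤ b) :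
    |Real.exp (-a) - Real.exp (-b)| ≤ Real.exp (-m) * |a - b| := by
  have key : ∀ a b : ℝ, m ≤ a → a ≤ b →
      |Real.exp (-a) - Real.exp (-b)| ≤ Real.exp (-m) * |a - b| := by
    intro a b ha hab
    have h1 : Real.exp (-b) ≤ Real.exp (-a) := Real.exp_le_exp.mpr (by linarith)
    have h2 : Real.exp (-a) ≤ Real.exp (-m) := Real.exp_le_exp.mpr (by linarith)
    rw [abs_of_nonneg (by linarith), abs_of_nonpos (by linarith)]
    have h3 : Real.exp (-b) = Real.exp (-a) * Real.exp (a - b) := by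
      rw [← Real.exp_add]; congr 1; ring
    have h4 := Real.add_one_le_exp (a - b)
    have h5 := Real.exp_pos (-a)
    rw [h3]
    calc Real.exp (-a) - Real.exp (-a) * Real.exp (a - b)
        = Real.exp (-a) * (1 - Real.exp (a - b)) := by ring
      _ ≤ Real.exp (-a) * (-(a - b)) := mul_le_mul_of_nonneg_left (by linarith) h5.le
      _ ≤ Real.exp (-m) * (-(a - b)) := mul_le_mul_of_nonneg_right h2 (by linarith)
  rcases le_total a b with h | h
  · exact key a b ha h
  · rw [abs_sub_comm, abs_sub_comm a b]
    exact key b a hb h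

theorem stmt11 {X Y : Type*} [NormedAddCommGroup X] [NormedSpace ℝ X] [CompleteSpace X]
    [TopologicalSpace.SeparableSpace X] [MeasurableSpace X] [BorelSpace X]
    [NormedAddCommGroup Y] [NormedSpace ℝ Y] [CompleteSpace Y]
    (Φ : X → Y → ℝ)
    (hmeas : ∀ y : Y, Measurable fun u => Φ u y)
    -- condition (i)
    (hi : ∀ ε r : ℝ, 0 < ε → 0 < r → ∃ M : ℝ, ∀ (u : X) (y : Y), ‖y‖ < r →
      M - ε * ‖u‖ ^ 2 ≤ Φ u y)
    -- condition (iv)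
    (hiv : ∀ ε r : ℝ, 0 < ε → 0 < r → ∃ C : ℝ, ∀ (u : X) (y y' : Y), ‖y‖ < r → ‖y'‖ < r →
      |Φ u y - Φ u y'| ≤ Real.exp (ε * ‖u‖ ^ 2 + C) * ‖y - y'‖)
    (μ0 : Measure X) [IsProbabilityMeasure μ0]
    (α : ℝ) (hα : 0 < α)
    (hint : Integrable (fun u => Real.exp (α * ‖u‖ ^ 2)) μ0) :
    ∀ r : ℝ, 0 < r → ∃ C : ℝ, 0 < C ∧ ∀ y y' : Y, ‖y‖ < r → ‖y'‖ < r →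
      |(∫ u, Real.exp (-Φ u y) ∂μ0) - ∫ u, Real.exp (-Φ u y') ∂μ0| ≤ C * ‖y - y'‖ := by
  intro r hr
  obtain ⟨M, hM⟩ := hi (α / 2) r (by positivity) hr
  obtain ⟨C, hC⟩ := hiv (α / 2) r (by positivity) hr
  have hI : ∀ y : Y, ‖y‖ < r → Integrable (fun u => Real.exp (-Φ u y)) μ0 := by
    intro y hy
    refine (hint.const_mul (Real.exp (-M))).mono'
      (hmeas y).neg.exp.aestronglyMeasurable (Filter.Eventually.of_forall fun u => ?_)
    rw [Real.norm_eq_abs, Real.abs_exp, ← Real.exp_add]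
    apply Real.exp_le_exp.mpr
    have h1 := hM u y hy
    have h2 : 0 ≤ α * ‖u‖ ^ 2 := by positivity
    linarith
  have hnn : 0 ≤ ∫ u, Real.exp (α * ‖u‖ ^ 2) ∂μ0 := integral_nonneg fun u => (Real.exp_pos _).le
  refine ⟨Real.exp (C - M) * (∫ u, Real.exp (α * ‖u‖ ^ 2) ∂μ0) + 1, by positivity, ?_⟩
  intro y y' hy hy'
  rw [← integral_sub (hI y hy) (hI y' hy'), ← Real.norm_eq_abs]
  have hb : ‖∫ u, (Real.exp (-Φ u y) - Real.exp (-Φ u y')) ∂μ0‖ ≤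
      ∫ u, (Real.exp (C - M) * ‖y - y'‖) * Real.exp (α * ‖u‖ ^ 2) ∂μ0 := by
    refine norm_integral_le_of_norm_le (hint.const_mul _) (Filter.Eventually.of_forall fun u => ?_)
    rw [Real.norm_eq_abs]
    refine (exp_neg_lip _ _ _ (hM u y hy) (hM u y' hy')).trans ?_
    refine (mul_le_mul_of_nonneg_left (hC u y y' hy hy') (Real.exp_pos _).le).trans (le_of_eq ?_)
    have : Real.exp (-(M - α / 2 * ‖u‖ ^ 2)) * Real.exp (α / 2 * ‖u‖ ^ 2 + C)
        = Real.exp (C - M) * Real.exp (α * ‖u‖ ^ 2) := by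
      rw [← Real.exp_add, ← Real.exp_add]; congr 1; ring
    rw [← mul_assoc, this]; ring
  rw [integral_const_mul] at hb
  refine hb.trans ?_
  have := norm_nonneg (y - y')
  nlinarith
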